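/- Let i ≠ j be indices in {1,…,N} and let T be a bounded operator on H that commutes with p_m for every m ∉ {i, j}. Write Q₀ := p_i p_j, Q₂ := q_i q_j, and let Q₁ denote either p_i q_j or q_i p_j. Then for all a, b ∈ {0, 1, 2} and every function f : {0,…,N} → ℂ one has f̂ Q_a T Q_b = Q_a T Q_b (τ_{a−b} f)^ and Q_a T Q_b f̂ = (τ_{b−a} f)^ Q_a T Q_b, where (τ_j f)(k) := f(k+j) if 0 ≤ k + j ≤ N and (τ_j f)(k) := 0 otherwise. -/

import Mathlib

/-!
With `q m = 1 - p m`, put `Π_S = ∏_{m ∈ S} q m ∏_{m ∉ S} p m` for `S ⊆ {1,…,N}` and let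
`n = ∑ m, q m` be the number operator. Since the `p m` are commuting idempotents, the `Π_S` add up
to `1` (`sum_occ`), `n Π_S = |S| Π_S = Π_S n` (`number_mul_occ`), and `f̂ = ∑_S f(|S|) Π_S`
(`hatOp_eq`).

For `X = Q_a T Q_b` one has `n X = X n + (a - b) X` (`number_mul_sandwich`): the part of `n` away
from `{i, j}` commutes with `X`, while `q i + q j` acts on `Q_a` as `a` and on `Q_b` as `b`.
Sandwiching this identity between `Π_S` and `Π_{S'}` gives `Π_S X Π_{S'} = 0` unless
`|S| - a = |S'| - b` (`occ_sandwich_eq_zero`). Expanding `X = ∑_{S,S'} Π_S X Π_{S'}`, both claims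
then hold term by term. The shifted weight is never evaluated outside `{0,…,N}`, because the
surviving terms have `|S|, |S'| ≤ N`.

The identities among the `p m` alone are computed in the commutative ring they generate.
-/

/-- The symmetrized products
`P_{k,N} = Σ_{a ∈ {0,1}^N, Σa_i = k} Π_i q_i^{a_i} p_i^{1−a_i}` (with `q_i = 1 − p_i`),
realized as a sum over subsets `S ⊆ {1,…,N}` of cardinality `k`. -/
noncomputable def symProj {H : Type*} [NormedAddCommGroup H] [InnerProductSpace ℂ H]
    {N : ℕ} (p : Fin N → (H →L[ℂ] H)) (k : ℕ) : H →L[ℂ] H :=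
  ∑ S ∈ Finset.powersetCard k (Finset.univ : Finset (Fin N)),
    (List.ofFn (fun i : Fin N => if i ∈ S then 1 - p i else p i)).prod

/-- The weighted operator `f̂ := Σ_{k=0}^N f(k) P_{k,N}`. -/
noncomputable def hatOp {H : Type*} [NormedAddCommGroup H] [InnerProductSpace ℂ H]
    {N : ℕ} (p : Fin N → (H →L[ℂ] H)) (f : ℕ → ℂ) : H →L[ℂ] H :=
  ∑ k ∈ Finset.range (N + 1), f k • symProj p k

/-- The shift `(τ_j f)(k) := f(k+j)` if `0 ≤ k + j ≤ N`, and `0` otherwise. -/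
noncomputable def shiftWeight (N : ℕ) (j : ℤ) (f : ℕ → ℂ) : ℕ → ℂ := fun k =>
  if 0 ≤ (k : ℤ) + j ∧ (k : ℤ) + j ≤ (N : ℤ) then f ((k : ℤ) + j).toNat else 0

/-- `Q_a` for `a ∈ {0,1,2}`: `Q₀ = p_i p_j`, `Q₁ ∈ {p_i q_j, q_i p_j}`,
`Q₂ = q_i q_j`. -/
def IsQdeg {H : Type*} [NormedAddCommGroup H] [InnerProductSpace ℂ H]
    {N : ℕ} (p : Fin N → (H →L[ℂ] H)) (i j : Fin N) (a : ℕ)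
    (A : H →L[ℂ] H) : Prop :=
  (a = 0 ∧ A = p i * p j) ∨
  (a = 1 ∧ (A = p i * (1 - p j) ∨ A = (1 - p i) * p j)) ∨
  (a = 2 ∧ A = (1 - p i) * (1 - p j))

section CommutativeRing

variable {R : Type*} [CommRing R] {N : ℕ}

lemma sum_prod_ite_eq_one (P : Fin N → R) :
    ∑ S : Finset (Fin N), ∏ i, (if i ∈ S then 1 - P i else P i) = 1 := by
  have h := Finset.prod_add (fun i => 1 - P i) P Finset.univ
  simp only [sub_add_cancel, Finset.prod_const_one, Finset.powerset_univ] at h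
  refine Eq.trans (Finset.sum_congr rfl fun S _ => ?_) h.symm
  rw [Finset.prod_ite]
  congr 2 <;> ext <;> simp

lemma sum_one_sub_mul_prod_ite (P : Fin N → R) (hP : ∀ i, P i * P i = P i)
    (S : Finset (Fin N)) :
    (∑ m, (1 - P m)) * ∏ i, (if i ∈ S then 1 - P i else P i)
      = (S.card : R) * ∏ i, (if i ∈ S then 1 - P i else P i) := by
  have key : ∀ m, (1 - P m) * ∏ i, (if i ∈ S then 1 - P i else P i)
      = if m ∈ S then ∏ i, (if i ∈ S then 1 - P i else P i) else 0 := by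
    intro m
    rw [← Finset.mul_prod_erase Finset.univ _ (Finset.mem_univ m), ← mul_assoc]
    split_ifs with h
    · congr 1
      linear_combination hP m
    · have : (1 - P m) * P m = 0 := by linear_combination -hP m
      rw [this, zero_mul]
  rw [Finset.sum_mul, Finset.sum_congr rfl fun m _ => key m]
  simp

end CommutativeRing

section Operators

universe u

variable {H : Type*} [NormedAddCommGroup H] [InnerProductSpace ℂ H] {N : ℕ}

/-- The joint spectral projection `∏_{m ∈ S} (1 - p m) ∏_{m ∉ S} p m`, with the factors ordered by
index as in `symProj`. -/
noncomputable def occ (p : Fin N → (H →L[ℂ] H)) (S : Finset (Fin N)) : H →L[ℂ] H :=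
  (List.ofFn (fun i : Fin N => if i ∈ S then 1 - p i else p i)).prod

/-- The number operator `∑ m, (1 - p m)`. -/
noncomputable def number (p : Fin N → (H →L[ℂ] H)) : H →L[ℂ] H := ∑ m, (1 - p m)

open scoped IsMulCommutative in
/-- Commuting operators lift to a commutative ring: the subalgebra they generate. -/
lemma exists_commRing_lift {H : Type u} [NormedAddCommGroup H] [InnerProductSpace ℂ H]
    (p : Fin N → (H →L[ℂ] H)) (hcomm : ∀ i j, Commute (p i) (p j)) :
    ∃ (R : Type u) (_ : CommRing R) (φ : R →+* (H →L[ℂ] H)) (P : Fin N → R),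
      Function.Injective φ ∧ ∀ i, φ (P i) = p i := by
  have hc : ∀ x ∈ Set.range p, ∀ y ∈ Set.range p, x * y = y * x := by
    rintro _ ⟨i, rfl⟩ _ ⟨j, rfl⟩
    exact hcomm i j
  have := Algebra.isMulCommutative_adjoin ℂ hc
  exact ⟨Algebra.adjoin ℂ (Set.range p), inferInstance,
    (Algebra.adjoin ℂ (Set.range p)).val.toRingHom,
    fun i => ⟨p i, Algebra.subset_adjoin ⟨i, rfl⟩⟩, Subtype.val_injective, fun _ => rfl⟩

lemma occ_eq_map {R : Type*} [CommRing R] (φ : R →+* (H →L[ℂ] H)) (P : Fin N → R)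
    (p : Fin N → (H →L[ℂ] H)) (h : ∀ i, φ (P i) = p i) (S : Finset (Fin N)) :
    occ p S = φ (∏ i, (if i ∈ S then 1 - P i else P i)) := by
  rw [occ, ← List.prod_ofFn, map_list_prod, List.map_ofFn]
  congr 2
  funext i
  by_cases hi : i ∈ S <;> simp [hi, h]

lemma sum_occ (p : Fin N → (H →L[ℂ] H)) (hcomm : ∀ i j, Commute (p i) (p j)) :
    ∑ S, occ p S = 1 := by
  obtain ⟨R, _, φ, P, _, h⟩ := exists_commRing_lift p hcomm
  simp only [occ_eq_map φ P p h]
  rw [← map_sum, sum_prod_ite_eq_one, map_one]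

lemma number_mul_occ (p : Fin N → (H →L[ℂ] H)) (hidem : ∀ i, IsIdempotentElem (p i))
    (hcomm : ∀ i j, Commute (p i) (p j)) (S : Finset (Fin N)) :
    number p * occ p S = (S.card : H →L[ℂ] H) * occ p S ∧
    occ p S * number p = (S.card : H →L[ℂ] H) * occ p S := by
  obtain ⟨R, _, φ, P, hφ, h⟩ := exists_commRing_lift p hcomm
  have hP : ∀ i, P i * P i = P i := fun i => hφ (by rw [map_mul, h]; exact hidem i)
  have hn : number p = φ (∑ m, (1 - P m)) := by simp [number, h]
  have key := congrArg φ (sum_one_sub_mul_prod_ite P hP S)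
  rw [occ_eq_map φ P p h, hn, ← map_mul, ← map_mul,
    mul_comm (∏ i, (if i ∈ S then 1 - P i else P i)), key, map_mul, map_natCast]
  exact ⟨rfl, rfl⟩

lemma hatOp_eq (p : Fin N → (H →L[ℂ] H)) (f : ℕ → ℂ) :
    hatOp p f = ∑ S, f S.card • occ p S := by
  rw [← Finset.powerset_univ, Finset.sum_powerset, hatOp, Finset.card_univ, Fintype.card_fin]
  refine Finset.sum_congr rfl fun k _ => ?_
  rw [symProj, Finset.smul_sum]
  refine Finset.sum_congr rfl fun S hS => ?_
  rw [(Finset.mem_powersetCard.mp hS).2, occ]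

/-- `q i + q j` acts on `Q_a` as the scalar `a`, from both sides. -/
lemma IsQdeg.pair_mul {p : Fin N → (H →L[ℂ] H)} (hidem : ∀ i, IsIdempotentElem (p i))
    (hcomm : ∀ i j, Commute (p i) (p j)) {i j : Fin N} {a : ℕ} {A : H →L[ℂ] H}
    (hA : IsQdeg p i j a A) :
    ((1 - p i) + (1 - p j)) * A = (a : H →L[ℂ] H) * A ∧
    A * ((1 - p i) + (1 - p j)) = (a : H →L[ℂ] H) * A := by
  obtain ⟨R, _, φ, P, hφ, h⟩ := exists_commRing_lift p hcomm
  have hP : ∀ i, P i * P i = P i := fun i => hφ (by rw [map_mul, h]; exact hidem i)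
  obtain ⟨A', rfl, hA'⟩ : ∃ A', φ A' = A ∧ ((1 - P i) + (1 - P j)) * A' = (a : R) * A' := by
    have h1 := hP i
    have h2 := hP j
    rcases hA with ⟨rfl, rfl⟩ | ⟨rfl, rfl | rfl⟩ | ⟨rfl, rfl⟩
    · refine ⟨P i * P j, by simp [h], ?_⟩
      push_cast
      linear_combination -P j * h1 - P i * h2
    · refine ⟨P i * (1 - P j), by simp [h], ?_⟩
      push_cast
      linear_combination -(1 - P j) * h1 + P i * h2
    · refine ⟨(1 - P i) * P j, by simp [h], ?_⟩
      push_cast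
      linear_combination P j * h1 - (1 - P i) * h2
    · refine ⟨(1 - P i) * (1 - P j), by simp [h], ?_⟩
      push_cast
      linear_combination (1 - P j) * h1 + (1 - P i) * h2
  have hq : (1 - p i) + (1 - p j) = φ ((1 - P i) + (1 - P j)) := by simp [h]
  rw [hq, ← map_mul, ← map_mul, mul_comm A', hA', map_mul, map_natCast]
  exact ⟨rfl, rfl⟩

lemma IsQdeg.commute {p : Fin N → (H →L[ℂ] H)} (hcomm : ∀ i j, Commute (p i) (p j))
    {i j : Fin N} {a : ℕ} {A : H →L[ℂ] H} (hA : IsQdeg p i j a A) (m : Fin N) :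
    Commute (1 - p m) A := by
  have hc : ∀ k, Commute (1 - p m) (p k) := fun k => (Commute.one_left _).sub_left (hcomm m k)
  have hq : ∀ k, Commute (1 - p m) (1 - p k) := fun k => (Commute.one_right _).sub_right (hc k)
  rcases hA with ⟨_, rfl⟩ | ⟨_, rfl | rfl⟩ | ⟨_, rfl⟩
  · exact (hc i).mul_right (hc j)
  · exact (hc i).mul_right (hq j)
  · exact (hq i).mul_right (hc j)
  · exact (hq i).mul_right (hq j)

/-- `Q_a T Q_b` changes the number operator by `a - b`; stated without subtraction. -/
lemma number_mul_sandwich {p : Fin N → (H →L[ℂ] H)} (hidem : ∀ i, IsIdempotentElem (p i))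
    (hcomm : ∀ i j, Commute (p i) (p j)) {i j : Fin N} (hij : i ≠ j) {T : H →L[ℂ] H}
    (hT : ∀ m : Fin N, m ≠ i → m ≠ j → Commute T (p m)) {a b : ℕ} {A B : H →L[ℂ] H}
    (hA : IsQdeg p i j a A) (hB : IsQdeg p i j b B) :
    number p * (A * T * B) + (b : H →L[ℂ] H) * (A * T * B)
      = (A * T * B) * number p + (a : H →L[ℂ] H) * (A * T * B) := by
  -- `M` is the part of the number operator away from `{i, j}`.
  obtain ⟨M, hM, hn⟩ : ∃ M, Commute M (A * T * B) ∧ number p = M + ((1 - p i) + (1 - p j)) := by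
    refine ⟨∑ m ∈ (Finset.univ.erase i).erase j, (1 - p m), ?_, ?_⟩
    · refine Commute.sum_left _ _ _ fun m hm => ?_
      simp only [Finset.mem_erase, Finset.mem_univ, and_true] at hm
      exact ((hA.commute hcomm m).mul_right
        ((Commute.one_left _).sub_left (hT m hm.2 hm.1).symm)).mul_right (hB.commute hcomm m)
    · rw [number, ← Finset.add_sum_erase _ _ (Finset.mem_univ i),
        ← Finset.add_sum_erase (Finset.univ.erase i) _
          (Finset.mem_erase.mpr ⟨hij.symm, Finset.mem_univ j⟩)]
      abel
  have h1 : ((1 - p i) + (1 - p j)) * (A * T * B) = (a : H →L[ℂ] H) * (A * T * B) := by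
    rw [← mul_assoc, ← mul_assoc, (hA.pair_mul hidem hcomm).1]
    simp only [mul_assoc]
  have h2 : (A * T * B) * ((1 - p i) + (1 - p j)) = (b : H →L[ℂ] H) * (A * T * B) := by
    rw [mul_assoc, (hB.pair_mul hidem hcomm).2, ← mul_assoc, ← mul_assoc,
      (Nat.cast_commute b (A * T)).eq]
  rw [hn, add_mul, mul_add, h1, h2, hM.eq]
  abel

lemma occ_sandwich_eq_zero {p : Fin N → (H →L[ℂ] H)} (hidem : ∀ i, IsIdempotentElem (p i))
    (hcomm : ∀ i j, Commute (p i) (p j)) {X : H →L[ℂ] H} {a b : ℕ}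
    (hX : number p * X + (b : H →L[ℂ] H) * X = X * number p + (a : H →L[ℂ] H) * X)
    (S S' : Finset (Fin N)) (h : S.card + b ≠ S'.card + a) :
    occ p S * X * occ p S' = 0 := by
  have hs := (number_mul_occ p hidem hcomm S).2
  have hs' := (number_mul_occ p hidem hcomm S').1
  have e1 : occ p S * (number p * X + (b : H →L[ℂ] H) * X) * occ p S'
      = ((S.card + b : ℕ) : ℂ) • (occ p S * X * occ p S') := by
    rw [mul_add, ← mul_assoc, hs, ← mul_assoc, ← (Nat.cast_commute b (occ p S)).eq,
      Nat.cast_smul_eq_nsmul, nsmul_eq_mul]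
    simp only [Nat.cast_add, add_mul, mul_assoc]
  have e2 : occ p S * (X * number p + (a : H →L[ℂ] H) * X) * occ p S'
      = ((S'.card + a : ℕ) : ℂ) • (occ p S * X * occ p S') := by
    rw [mul_assoc, add_mul, mul_assoc X, hs', ← mul_assoc X,
      ← (Nat.cast_commute S'.card X).eq, mul_assoc, mul_assoc, mul_add, ← mul_assoc (occ p S),
      ← mul_assoc (occ p S), ← (Nat.cast_commute S'.card (occ p S)).eq,
      ← (Nat.cast_commute a (occ p S)).eq, Nat.cast_smul_eq_nsmul, nsmul_eq_mul]
    simp only [Nat.cast_add, add_mul, mul_assoc]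
  rw [hX, e2, ← sub_eq_zero, ← sub_smul, smul_eq_zero, sub_eq_zero] at e1
  exact e1.resolve_left fun hc => h (Nat.cast_injective hc).symm

/-- Two weights can be exchanged across `X` as soon as they agree on all pairs of occupation
numbers between which `X` has a nonzero matrix block. -/
lemma hatOp_mul_eq_mul_hatOp {p : Fin N → (H →L[ℂ] H)} (hcomm : ∀ i j, Commute (p i) (p j))
    {X : H →L[ℂ] H} {f g : ℕ → ℂ}
    (h : ∀ S S' : Finset (Fin N), f S.card = g S'.card ∨ occ p S * X * occ p S' = 0) :
    hatOp p f * X = X * hatOp p g := by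
  calc hatOp p f * X = hatOp p f * X * ∑ S', occ p S' := by rw [sum_occ p hcomm, mul_one]
    _ = ∑ S, ∑ S', f S.card • (occ p S * X * occ p S') := by
        simp only [hatOp_eq, Finset.sum_mul, Finset.mul_sum, smul_mul_assoc]
        exact Finset.sum_comm
    _ = ∑ S, ∑ S', g S'.card • (occ p S * X * occ p S') := by
        refine Finset.sum_congr rfl fun S _ => Finset.sum_congr rfl fun S' _ => ?_
        rcases h S S' with h | h <;> simp [h]
    _ = (∑ S, occ p S) * (X * hatOp p g) := by
        simp only [hatOp_eq, Finset.sum_mul, Finset.mul_sum, Finset.smul_sum, mul_smul_comm, mul_assoc]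
        exact Finset.sum_comm
    _ = X * hatOp p g := by rw [sum_occ p hcomm, one_mul]

lemma shiftWeight_of_eq {f : ℕ → ℂ} {k l a b : ℕ} (hl : l ≤ N) (h : l + b = k + a) :
    shiftWeight N ((a : ℤ) - (b : ℤ)) f k = f l := by
  have e : (k : ℤ) + ((a : ℤ) - (b : ℤ)) = l := by omega
  rw [shiftWeight, e, if_pos (by omega), Int.toNat_natCast]

end Operators

/-- Commutation of weights through the projections `Q_a`: if `T` commutes with
`p_m` for every `m ∉ {i,j}`, then for `Q_a, Q_b` as above and every weight `f`,
`f̂ Q_a T Q_b = Q_a T Q_b (τ_{a−b} f)^` and `Q_a T Q_b f̂ = (τ_{b−a} f)^ Q_a T Q_b`. -/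
theorem statement4 {H : Type*} [NormedAddCommGroup H] [InnerProductSpace ℂ H]
    [CompleteSpace H] (N : ℕ) (hN : 2 ≤ N) (p : Fin N → (H →L[ℂ] H))
    (hidem : ∀ i, IsIdempotentElem (p i))
    (hsa : ∀ i, IsSelfAdjoint (p i))
    (hcomm : ∀ i j, Commute (p i) (p j))
    (i j : Fin N) (hij : i ≠ j) (T : H →L[ℂ] H)
    (hT : ∀ m : Fin N, m ≠ i → m ≠ j → Commute T (p m))
    (a b : ℕ) (A B : H →L[ℂ] H)
    (hA : IsQdeg p i j a A) (hB : IsQdeg p i j b B) (f : ℕ → ℂ) :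
    hatOp p f * (A * T * B)
        = (A * T * B) * hatOp p (shiftWeight N ((a : ℤ) - (b : ℤ)) f) ∧
    (A * T * B) * hatOp p f
        = hatOp p (shiftWeight N ((b : ℤ) - (a : ℤ)) f) * (A * T * B) := by
  have hX := number_mul_sandwich hidem hcomm hij hT hA hB
  have hle : ∀ S : Finset (Fin N), S.card ≤ N := fun S => by simpa using S.card_le_univ
  refine ⟨hatOp_mul_eq_mul_hatOp hcomm fun S S' => ?_,
    (hatOp_mul_eq_mul_hatOp hcomm fun S S' => ?_).symm⟩ <;>
  by_cases h : S.card + b = S'.card + a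
  · exact .inl (shiftWeight_of_eq (hle S) h).symm
  · exact .inr (occ_sandwich_eq_zero hidem hcomm hX S S' h)
  · exact .inl (shiftWeight_of_eq (hle S') h.symm)
  · exact .inr (occ_sandwich_eq_zero hidem hcomm hX S S' h)
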